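/- Let p > 2 be a real number with 2n ≤ p ≤ 2n+1 for some positive integer n, and let u_p : ℝ → ℂ be defined by u_p(y) = exp(i y^p) for y ≥ 0 and u_p(y) = exp( i cos(πp)|y|^p − sin(πp)|y|^p ) for y < 0 (i.e. u_p(y) = exp(i y^p) with the principal branch of the complex power). Then for every real-valued φ ∈ C_c^∞(ℝ) with supp φ ⊆ [−1,1] and every point (x₀,ξ₀) ∈ ℝ² \ {(0,0)} with x₀ ≠ 0, there exists an open cone Γ ⊆ ℝ² \ {0} containing (x₀,ξ₀) such that for every N ∈ ℕ, sup_{(x,ξ) ∈ Γ} (1 + x² + ξ²)^{N/2} · | ∫_ℝ u_p(y) e^{−i y ξ} φ(y−x) dy | < ∞. (Equivalently, the Gabor wave front set of u_p is contained in {0} × (ℝ \ {0}).) -/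

import Mathlib

open MeasureTheory

namespace Stmt13

/-- `u_p(y) = exp(i y^p)` with the principal branch of the complex power:
`u_p(y) = exp(i y^p)` for `y ≥ 0` and
`u_p(y) = exp(i cos(πp)|y|^p − sin(πp)|y|^p)` for `y < 0`. -/
noncomputable def u (p : ℝ) : ℝ → ℂ := fun y =>
  if 0 ≤ y then Complex.exp (Complex.I * ((y ^ p : ℝ) : ℂ))
  else Complex.exp ((Complex.I * (Real.cos (Real.pi * p) : ℂ)
    - (Real.sin (Real.pi * p) : ℂ)) * ((|y| ^ p : ℝ) : ℂ))

def Bd (L : Set (ℝ × ℝ)) (m : ℝ) (a : ℝ × ℝ → ℝ → ℂ) : Prop :=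
  ∃ K : ℝ, 0 ≤ K ∧ ∀ z ∈ L, ∀ y : ℝ, |y - z.1| < 2 → ‖a z y‖ ≤ K * z.1 ^ m

def Sy (L : Set (ℝ × ℝ)) : ℕ → ℝ → (ℝ × ℝ → ℝ → ℂ) → Prop
  | 0, m, a => Bd L m a
  | k + 1, m, a => Bd L m a ∧ ∃ a' : ℝ × ℝ → ℝ → ℂ,
      (∀ z ∈ L, ∀ y : ℝ, |y - z.1| < 2 → HasDerivAt (a z) (a' z y) y) ∧ Sy L k m a'

theorem Sy.bd {L : Set (ℝ × ℝ)} {k : ℕ} {m : ℝ} {a : ℝ × ℝ → ℝ → ℂ} (h : Sy L k m a) :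
    Bd L m a := by
  cases k with
  | zero => exact h
  | succ k => exact h.1

theorem Sy.pred {L : Set (ℝ × ℝ)} {k : ℕ} {m : ℝ} {a : ℝ × ℝ → ℝ → ℂ} (h : Sy L (k + 1) m a) :
    Sy L k m a := by
  induction k generalizing a with
  | zero => exact h.1
  | succ k ih =>
    obtain ⟨h1, a', h2, h3⟩ := h
    exact ⟨h1, a', h2, ih h3⟩

theorem Bd.mono {L : Set (ℝ × ℝ)} (hL : ∀ z ∈ L, 4 ≤ z.1) {m m' : ℝ} (hm : m ≤ m')
    {a : ℝ × ℝ → ℝ → ℂ} (h : Bd L m a) : Bd L m' a := by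
  obtain ⟨K, hK, h⟩ := h
  refine ⟨K, hK, fun z hz y hy => (h z hz y hy).trans ?_⟩
  have := hL z hz
  gcongr
  linarith

theorem Sy.mono {L : Set (ℝ × ℝ)} (hL : ∀ z ∈ L, 4 ≤ z.1) {k : ℕ} {m m' : ℝ} (hm : m ≤ m')
    {a : ℝ × ℝ → ℝ → ℂ} (h : Sy L k m a) : Sy L k m' a := by
  induction k generalizing a with
  | zero => exact Bd.mono hL hm h
  | succ k ih =>
    obtain ⟨h1, a', h2, h3⟩ := h
    exact ⟨h1.mono hL hm, a', h2, ih h3⟩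

theorem Bd.add {L : Set (ℝ × ℝ)} {m : ℝ} {a b : ℝ × ℝ → ℝ → ℂ} (ha : Bd L m a) (hb : Bd L m b) :
    Bd L m (fun z y => a z y + b z y) := by
  obtain ⟨K, hK, h⟩ := ha
  obtain ⟨K', hK', h'⟩ := hb
  refine ⟨K + K', by positivity, fun z hz y hy => (norm_add_le _ _).trans ?_⟩
  have := h z hz y hy
  have := h' z hz y hy
  linarith

theorem Sy.add {L : Set (ℝ × ℝ)} {k : ℕ} {m : ℝ} {a b : ℝ × ℝ → ℝ → ℂ} (ha : Sy L k m a)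
    (hb : Sy L k m b) : Sy L k m (fun z y => a z y + b z y) := by
  induction k generalizing a b with
  | zero => exact Bd.add ha hb
  | succ k ih =>
    obtain ⟨h1, a', h2, h3⟩ := ha
    obtain ⟨g1, b', g2, g3⟩ := hb
    exact ⟨h1.add g1, _, fun z hz y hy => (h2 z hz y hy).add (g2 z hz y hy), ih h3 g3⟩

theorem Bd.mul {L : Set (ℝ × ℝ)} (hL : ∀ z ∈ L, 4 ≤ z.1) {m m' : ℝ} {a b : ℝ × ℝ → ℝ → ℂ}
    (ha : Bd L m a) (hb : Bd L m' b) :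
    Bd L (m + m') (fun z y => a z y * b z y) := by
  obtain ⟨K, hK, h⟩ := ha
  obtain ⟨K', hK', h'⟩ := hb
  refine ⟨K * K', by positivity, fun z hz y hy => ?_⟩
  have h4 := hL z hz
  have := h z hz y hy
  have := h' z hz y hy
  rw [norm_mul, Real.rpow_add (by linarith)]
  calc _ ≤ (K * z.1 ^ m) * (K' * z.1 ^ m') := by gcongr
    _ = _ := by ring

theorem Sy.mul {L : Set (ℝ × ℝ)} (hL : ∀ z ∈ L, 4 ≤ z.1) {k : ℕ} {m m' : ℝ}
    {a b : ℝ × ℝ → ℝ → ℂ} (ha : Sy L k m a)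
    (hb : Sy L k m' b) : Sy L k (m + m') (fun z y => a z y * b z y) := by
  induction k generalizing a b with
  | zero => exact Bd.mul hL ha hb
  | succ k ih =>
    have ha0 := ha.pred
    have hb0 := hb.pred
    obtain ⟨h1, a', h2, h3⟩ := ha
    obtain ⟨g1, b', g2, g3⟩ := hb
    exact ⟨h1.mul hL g1, _, fun z hz y hy => (h2 z hz y hy).mul (g2 z hz y hy),
      (ih h3 hb0).add (ih ha0 g3)⟩

/-- functions independent of y -/
theorem Sy.const {L : Set (ℝ × ℝ)} {k : ℕ} {m : ℝ}
    {c : ℝ × ℝ → ℂ} (K : ℝ) (hK : 0 ≤ K) (hc : ∀ z ∈ L, ‖c z‖ ≤ K * z.1 ^ m) :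
    Sy L k m (fun z _ => c z) := by
  induction k generalizing c K with
  | zero => exact ⟨K, hK, fun z hz y _ => hc z hz⟩
  | succ k ih =>
    refine ⟨⟨K, hK, fun z hz y _ => hc z hz⟩, fun _ _ => 0, fun z hz y _ => hasDerivAt_const _ _,
      ih 0 le_rfl ?_⟩
    intro z hz
    simp

theorem Sy.inv {L : Set (ℝ × ℝ)} (hL : ∀ z ∈ L, 4 ≤ z.1) {k : ℕ} {m : ℝ}
    {a : ℝ × ℝ → ℝ → ℂ} (ha : Sy L k m a) (K : ℝ) (hK : 0 < K)
    (h : ∀ z ∈ L, ∀ y : ℝ, |y - z.1| < 2 → K * z.1 ^ m ≤ ‖a z y‖) :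
    Sy L k (-m) (fun z y => (a z y)⁻¹) := by
  have h0 : Bd L (-m) (fun z y => (a z y)⁻¹) := by
    refine ⟨K⁻¹, by positivity, fun z hz y hy => ?_⟩
    have h4 := hL z hz
    have hz0 : 0 < z.1 := by linarith
    rw [norm_inv, Real.rpow_neg hz0.le, ← mul_inv]
    have := h z hz y hy
    gcongr
  induction k with
  | zero => exact h0
  | succ k ih =>
    have i1 := ih ha.pred
    obtain ⟨h1, a', h2, h3⟩ := ha
    have hd : Sy L k (-m) (fun z y => ((-1 : ℂ) * a' z y) * ((a z y)⁻¹ * (a z y)⁻¹)) := by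
      have hm1 : Sy L k 0 (fun _ _ => (-1 : ℂ)) := Sy.const 1 zero_le_one (by simp)
      have := (hm1.mul hL h3).mul hL (i1.mul hL i1)
      convert this using 1
      ring
    refine ⟨h0, _, fun z hz y hy => ?_, hd⟩
    have h4 := hL z hz
    have hz0 : 0 < z.1 := by linarith
    have hne : a z y ≠ 0 := by
      rw [← norm_pos_iff]
      have := h z hz y hy
      have : 0 < K * z.1 ^ m := by positivity
      linarith
    refine ((h2 z hz y hy).fun_inv hne).congr_deriv ?_
    rw [div_eq_mul_inv, pow_two, mul_inv]
    ring

theorem Sy.rpow {L : Set (ℝ × ℝ)} (hL : ∀ z ∈ L, 4 ≤ z.1) (k : ℕ) (q : ℝ) :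
    Sy L k q (fun _ y => ((y ^ q : ℝ) : ℂ)) := by
  have key : ∀ q : ℝ, Bd L q (fun _ y => ((y ^ q : ℝ) : ℂ)) := by
    intro q
    refine ⟨2 ^ |q|, by positivity, fun z hz y hy => ?_⟩
    have h4 := hL z hz
    rw [abs_lt] at hy
    have hy0 : 0 < y := by linarith
    have hz0 : 0 < z.1 := by linarith
    rw [Complex.norm_real, Real.norm_of_nonneg (by positivity)]
    rcases le_total 0 q with hq | hq
    · rw [abs_of_nonneg hq, ← Real.mul_rpow (by norm_num) hz0.le]
      gcongr
      linarith
    · rw [abs_of_nonpos hq, Real.rpow_neg (by norm_num), ← Real.inv_rpow (by norm_num),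
        ← Real.mul_rpow (by norm_num) hz0.le]
      apply Real.rpow_le_rpow_of_nonpos (by positivity) _ hq
      linarith
  induction k generalizing q with
  | zero => exact key q
  | succ k ih =>
    refine ⟨key q, fun _ y => (q : ℂ) * ((y ^ (q - 1) : ℝ) : ℂ), fun z hz y hy => ?_, ?_⟩
    · have h4 := hL z hz
      rw [abs_lt] at hy
      have hy0 : 0 < y := by linarith
      have := (Real.hasDerivAt_rpow_const (p := q) (Or.inl hy0.ne')).ofReal_comp
      simpa using this
    · have hq : Sy L k 0 (fun _ _ => (q : ℂ)) :=
        Sy.const |q| (abs_nonneg q) (by simp)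
      exact (hq.mul hL (ih (q - 1))).mono hL (by linarith)

theorem Sy.window {L : Set (ℝ × ℝ)} (k : ℕ) (φ : ℝ → ℝ)
    (h1 : ContDiff ℝ (⊤ : ℕ∞) φ) (h2 : HasCompactSupport φ) :
    Sy L k 0 (fun z y => ((φ (y - z.1) : ℝ) : ℂ)) := by
  have key : ∀ φ : ℝ → ℝ, ContDiff ℝ (⊤ : ℕ∞) φ → HasCompactSupport φ →
      Bd L 0 (fun z y => ((φ (y - z.1) : ℝ) : ℂ)) := by
    intro φ h1 h2
    obtain ⟨K, hK⟩ := h2.exists_bound_of_continuous h1.continuous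
    refine ⟨K, (norm_nonneg _).trans (hK 0), fun z hz y hy => ?_⟩
    simpa using hK (y - z.1)
  induction k generalizing φ with
  | zero => exact key φ h1 h2
  | succ k ih =>
    have h1' := contDiff_infty_iff_deriv.1 h1
    refine ⟨key φ h1 h2, fun z y => ((deriv φ (y - z.1) : ℝ) : ℂ), fun z hz y hy => ?_,
      ih _ h1'.2 h2.deriv⟩
    have hd : HasDerivAt φ (deriv φ (y - z.1)) (y - z.1) := (h1'.1 _).hasDerivAt
    exact (hd.comp_sub_const y z.1).ofReal_comp

theorem osc {L : Set (ℝ × ℝ)} (hL : ∀ z ∈ L, 4 ≤ z.1) (q : ℝ)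
    (f g : ℝ × ℝ → ℝ → ℂ)
    (hf : ∀ z ∈ L, ∀ y : ℝ, |y - z.1| < 2 → HasDerivAt (f z) (g z y) y)
    (hre : ∀ z ∈ L, ∀ y : ℝ, |y - z.1| < 2 → (f z y).re ≤ 0)
    (hg : ∀ k, Sy L k q g) (K : ℝ) (hK : 0 < K)
    (hlow : ∀ z ∈ L, ∀ y : ℝ, |y - z.1| < 2 → K * z.1 ^ q ≤ ‖g z y‖)
    (k : ℕ) : ∀ (m : ℝ) (ψ : ℝ × ℝ → ℝ → ℂ), Sy L (k + 1) m ψ →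
      (∀ z ∈ L, ∀ y, |y - z.1| < 2 → 1 < |y - z.1| → ψ z y = 0) →
      ∃ M : ℝ, 0 ≤ M ∧ ∀ z ∈ L,
        ‖∫ y in (z.1 - 3 / 2)..(z.1 + 3 / 2), Complex.exp (f z y) * ψ z y‖ ≤
          M * z.1 ^ (m - k * q) := by
  have hI : ∀ z : ℝ × ℝ, ∀ y ∈ Set.uIcc (z.1 - 3 / 2) (z.1 + 3 / 2), |y - z.1| < 2 := by
    intro z y hy
    rw [Set.uIcc_of_le (by linarith), Set.mem_Icc] at hy
    rw [abs_lt]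
    constructor <;> linarith [hy.1, hy.2]
  induction k with
  | zero =>
    intro m ψ hψ _
    obtain ⟨K', hK', h⟩ := hψ.bd
    refine ⟨K' * 3, by positivity, fun z hz => ?_⟩
    have := intervalIntegral.norm_integral_le_of_norm_le_const (a := z.1 - 3 / 2)
      (b := z.1 + 3 / 2) (C := K' * z.1 ^ m) (f := fun y => Complex.exp (f z y) * ψ z y) ?_
    · refine this.trans (le_of_eq ?_)
      rw [show z.1 + 3 / 2 - (z.1 - 3 / 2) = 3 by ring]
      simp
      ring
    · intro y hy
      have hy' := hI z y (Set.uIoc_subset_uIcc hy)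
      rw [norm_mul, Complex.norm_exp]
      have e1 : Real.exp (f z y).re ≤ 1 := Real.exp_le_one_iff.2 (hre z hz y hy')
      calc _ ≤ 1 * ‖ψ z y‖ := by gcongr
        _ ≤ _ := by rw [one_mul]; exact h z hz y hy'
  | succ k ih =>
    intro m ψ hψ hsupp
    have hinv := Sy.inv hL (hg (k + 1 + 1)) K hK hlow
    have hχ := hψ.mul hL hinv
    obtain ⟨_, χ', hd, hχ'⟩ := hχ
    have hs' : ∀ z ∈ L, ∀ y, |y - z.1| < 2 → 1 < |y - z.1| → χ' z y = 0 := by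
      intro z hz y hy2 hy
      have h0 : (fun y => ψ z y * (g z y)⁻¹) =ᶠ[nhds y] fun _ => 0 := by
        have : ∀ᶠ t in nhds y, 1 < |t - z.1| :=
          (by fun_prop : Continuous fun t : ℝ => |t - z.1|).continuousAt.eventually_const_lt hy
        have h' : ∀ᶠ t in nhds y, |t - z.1| < 2 :=
          (by fun_prop : Continuous fun t : ℝ => |t - z.1|).continuousAt.eventually_lt_const hy2
        filter_upwards [this, h'] with t ht ht'
        rw [hsupp z hz t ht' ht, zero_mul]
      exact (hd z hz y hy2).unique ((hasDerivAt_const y (0 : ℂ)).congr_of_eventuallyEq h0)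
    obtain ⟨M, hM, ihM⟩ := ih (m + -q) χ' hχ' hs'
    refine ⟨M, hM, fun z hz => ?_⟩
    have hd2 : ∀ y ∈ Set.uIcc (z.1 - 3 / 2) (z.1 + 3 / 2),
        HasDerivAt (fun y => Complex.exp (f z y) * (ψ z y * (g z y)⁻¹))
          (Complex.exp (f z y) * ψ z y + Complex.exp (f z y) * χ' z y) y := by
      intro y hy
      have hy' := hI z y hy
      have h4 := hL z hz
      have hz0 : 0 < z.1 := by linarith
      have hne : g z y ≠ 0 := by
        rw [← norm_pos_iff]
        have := hlow z hz y hy'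
        have : 0 < K * z.1 ^ q := by positivity
        linarith
      refine (((hf z hz y hy').cexp).fun_mul (hd z hz y hy')).congr_deriv ?_
      field_simp
    have cf : ContinuousOn (fun y => Complex.exp (f z y))
        (Set.uIcc (z.1 - 3 / 2) (z.1 + 3 / 2)) := fun y hy =>
      ((hf z hz y (hI z y hy)).cexp).continuousAt.continuousWithinAt
    have cψ : ContinuousOn (ψ z) (Set.uIcc (z.1 - 3 / 2) (z.1 + 3 / 2)) := by
      obtain ⟨_, ψ', h, _⟩ := hψ
      exact fun y hy => (h z hz y (hI z y hy)).continuousAt.continuousWithinAt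
    have cχ : ContinuousOn (χ' z) (Set.uIcc (z.1 - 3 / 2) (z.1 + 3 / 2)) := by
      obtain ⟨_, ψ', h, _⟩ := hχ'
      exact fun y hy => (h z hz y (hI z y hy)).continuousAt.continuousWithinAt
    have i1 := (cf.fun_mul cψ).intervalIntegrable (μ := volume)
    have i2 := (cf.fun_mul cχ).intervalIntegrable (μ := volume)
    have hF := intervalIntegral.integral_eq_sub_of_hasDerivAt hd2 (i1.add i2)
    rw [intervalIntegral.integral_add i1 i2, hsupp z hz (z.1 + 3 / 2) (by norm_num [abs_of_pos])
      (by norm_num [abs_of_pos]), hsupp z hz (z.1 - 3 / 2) (by norm_num [abs_div])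
      (by norm_num [abs_div])] at hF
    have hF' : ∫ y in (z.1 - 3 / 2)..(z.1 + 3 / 2), Complex.exp (f z y) * ψ z y =
        -∫ y in (z.1 - 3 / 2)..(z.1 + 3 / 2), Complex.exp (f z y) * χ' z y := by
      linear_combination hF
    rw [hF', norm_neg]
    convert ihM z hz using 3
    push_cast
    ring

theorem core (p : ℝ) (hp : 2 < p) (c : ℂ) (hc : ‖c‖ = 1) (hcr : c.re ≤ 0) (C : ℝ) (hC : 0 < C)
    (φ : ℝ → ℝ) (hφ : ContDiff ℝ (⊤ : ℕ∞) φ) (hs : Function.support φ ⊆ Set.Icc (-1 : ℝ) 1)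
    (v : ℝ → ℂ) (hv1 : ∀ y, ‖v y‖ ≤ 1)
    (hv : ∀ y, 0 < y → v y = Complex.exp (c * ((y ^ p : ℝ) : ℂ))) (N : ℕ) :
    ∃ M : ℝ, ∀ x ξ : ℝ, 0 < x → |ξ| ≤ C * x →
      (1 + x ^ 2 + ξ ^ 2) ^ ((N : ℝ) / 2) *
        ‖∫ y : ℝ, v y * Complex.exp (-(Complex.I) * (y : ℂ) * (ξ : ℂ))
          * (φ (y - x) : ℂ)‖ ≤ M := by
  have hcs : HasCompactSupport φ := HasCompactSupport.of_support_subset_isCompact isCompact_Icc hs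
  have hzero : ∀ t, 1 < |t| → φ t = 0 := by
    intro t ht
    by_contra h
    have := abs_le.2 (hs h)
    linarith
  have hev := (Filter.eventually_ge_atTop (4 : ℝ)).and
    ((tendsto_rpow_atTop (show 0 < p - 2 by linarith)).eventually_ge_atTop (C * 2 ^ p / p))
  obtain ⟨R, hR⟩ := Filter.eventually_atTop.1 hev
  set L : Set (ℝ × ℝ) := {z | R ≤ z.1 ∧ |z.2| ≤ C * z.1} with hLdef
  have hL : ∀ z ∈ L, 4 ≤ z.1 := fun z hz => (hR z.1 hz.1).1
  let f : ℝ × ℝ → ℝ → ℂ := fun z y => c * ((y ^ p : ℝ) : ℂ) + -(Complex.I) * (y : ℂ) * (z.2 : ℂ)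
  let g : ℝ × ℝ → ℝ → ℂ := fun z y =>
    (c * (p : ℂ)) * ((y ^ (p - 1) : ℝ) : ℂ) + -(Complex.I) * (z.2 : ℂ)
  have ypos : ∀ z ∈ L, ∀ y : ℝ, |y - z.1| < 2 → 0 < y := by
    intro z hz y hy
    have := hL z hz
    rw [abs_lt] at hy
    linarith
  have hf : ∀ z ∈ L, ∀ y : ℝ, |y - z.1| < 2 → HasDerivAt (f z) (g z y) y := by
    intro z hz y hy
    have hy0 := ypos z hz y hy
    have d1 := (Real.hasDerivAt_rpow_const (p := p) (Or.inl hy0.ne')).ofReal_comp.const_mul c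
    have d2 := (((hasDerivAt_id y).ofReal_comp).const_mul (-(Complex.I))).mul_const (z.2 : ℂ)
    refine (d1.fun_add d2).congr_deriv ?_
    simp only [g]
    push_cast
    ring
  have hre : ∀ z ∈ L, ∀ y : ℝ, |y - z.1| < 2 → (f z y).re ≤ 0 := by
    intro z hz y hy
    have hy0 := ypos z hz y hy
    have : (f z y).re = c.re * y ^ p := by
      simp [f]
    rw [this]
    exact mul_nonpos_of_nonpos_of_nonneg hcr (by positivity)
  have hg : ∀ k, Sy L k (p - 1) g := by
    intro k
    have h1 : Sy L k 0 (fun _ _ => c * (p : ℂ)) := Sy.const ‖c * (p : ℂ)‖ (norm_nonneg _) (by simp)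
    have h2 : Sy L k (p - 1) (fun z _ => -(Complex.I) * (z.2 : ℂ)) := by
      refine Sy.const C hC.le fun z hz => ?_
      have h4 := hL z hz
      have : z.1 ≤ z.1 ^ (p - 1) := Real.self_le_rpow_of_one_le (by linarith) (by linarith)
      simp only [norm_mul, norm_neg, Complex.norm_I, one_mul, Complex.norm_real, Real.norm_eq_abs]
      exact hz.2.trans (by gcongr)
    have h3 := h1.mul hL (Sy.rpow hL k (p - 1))
    rw [zero_add] at h3
    exact h3.add h2
  have hlow : ∀ z ∈ L, ∀ y : ℝ, |y - z.1| < 2 → (p / 2 ^ p) * z.1 ^ (p - 1) ≤ ‖g z y‖ := by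
    intro z hz y hy
    have hy0 := ypos z hz y hy
    have h4 := hL z hz
    have hz0 : 0 < z.1 := by linarith
    have hb := (hR z.1 hz.1).2
    have e1 : ‖(c * (p : ℂ)) * ((y ^ (p - 1) : ℝ) : ℂ)‖ = p * y ^ (p - 1) := by
      rw [norm_mul, norm_mul, hc, Complex.norm_real, Complex.norm_real,
        Real.norm_of_nonneg (by linarith), Real.norm_of_nonneg (by positivity), one_mul]
    have e2 : ‖-(Complex.I) * (z.2 : ℂ)‖ = |z.2| := by simp
    have e3 : ‖(c * (p : ℂ)) * ((y ^ (p - 1) : ℝ) : ℂ)‖ - ‖-(Complex.I) * (z.2 : ℂ)‖ ≤ ‖g z y‖ :=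
      norm_sub_le_norm_add _ _
    rw [e1, e2] at e3
    have e4 : (z.1 / 2) ^ (p - 1) ≤ y ^ (p - 1) := by
      rw [abs_lt] at hy
      apply Real.rpow_le_rpow <;> linarith
    have e5 : (z.1 / 2) ^ (p - 1) = 2 * z.1 ^ (p - 1) / 2 ^ p := by
      rw [Real.div_rpow hz0.le (by norm_num), Real.rpow_sub_one (x := 2) (by norm_num)]
      field_simp
    have e6 : z.1 ^ (p - 1) = z.1 ^ (p - 2) * z.1 := by
      rw [← Real.rpow_add_one hz0.ne']
      congr 1
      ring
    have e7 : C * z.1 ≤ p / 2 ^ p * z.1 ^ (p - 1) := by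
      rw [e6, ← mul_assoc]
      gcongr
      rw [div_le_iff₀ (by linarith)] at hb
      rw [div_mul_eq_mul_div, le_div_iff₀ (by positivity)]
      linarith
    have e8 : p * (z.1 / 2) ^ (p - 1) ≤ p * y ^ (p - 1) := by gcongr
    have e9 : p * (z.1 / 2) ^ (p - 1) = 2 * (p / 2 ^ p * z.1 ^ (p - 1)) := by
      rw [e5]; ring
    have := hz.2
    linarith
  obtain ⟨M, hM, hosc⟩ := osc hL (p - 1) f g hf hre hg (p / 2 ^ p) (by positivity) hlow N 0
    (fun z y => ((φ (y - z.1) : ℝ) : ℂ)) (Sy.window _ φ hφ hcs) (by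
      intro z hz y _ hy
      simp [hzero _ hy])
  -- trivial bound
  have htriv : ∀ x ξ : ℝ, ‖∫ y : ℝ, v y * Complex.exp (-(Complex.I) * (y : ℂ) * (ξ : ℂ))
          * (φ (y - x) : ℂ)‖ ≤ ∫ y, ‖φ y‖ := by
    intro x ξ
    rw [← integral_sub_right_eq_self (fun y => ‖φ y‖) x]
    apply norm_integral_le_of_norm_le
    · exact ((hφ.continuous.integrable_of_hasCompactSupport hcs).norm).comp_sub_right x
    · refine Filter.Eventually.of_forall fun y => ?_
      rw [norm_mul, norm_mul, Complex.norm_exp, Complex.norm_real]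
      have : (-(Complex.I) * (y : ℂ) * (ξ : ℂ)).re = 0 := by simp
      rw [this, Real.exp_zero, mul_one]
      exact mul_le_of_le_one_left (norm_nonneg _) (hv1 y)
  have hR0 : 0 < R := by linarith [(hR R le_rfl).1]
  refine ⟨max ((1 + R ^ 2 + (C * R) ^ 2) ^ ((N : ℝ) / 2) * ∫ y, ‖φ y‖)
    ((2 + C ^ 2) ^ ((N : ℝ) / 2) * M), fun x ξ hx hξ => ?_⟩
  rcases lt_or_ge x R with hxR | hxR
  · refine le_trans ?_ (le_max_left _ _)
    have hξ2 : |ξ| ≤ C * R := hξ.trans (by gcongr)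
    have h1 : ξ ^ 2 ≤ (C * R) ^ 2 := sq_le_sq' (by linarith [neg_abs_le ξ]) ((le_abs_self ξ).trans hξ2)
    have h2 : x ^ 2 ≤ R ^ 2 := by gcongr
    have := htriv x ξ
    gcongr
  · refine le_trans ?_ (le_max_right _ _)
    have hz : ((x, ξ) : ℝ × ℝ) ∈ L := ⟨hxR, hξ⟩
    have h4 : 4 ≤ x := hL _ hz
    have hint : ∫ y : ℝ, v y * Complex.exp (-(Complex.I) * (y : ℂ) * (ξ : ℂ)) * (φ (y - x) : ℂ) =
        ∫ y in (x - 3 / 2)..(x + 3 / 2), Complex.exp (f (x, ξ) y) * ((φ (y - x) : ℝ) : ℂ) := by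
      rw [← intervalIntegral.integral_eq_integral_of_support_subset (a := x - 3 / 2)
        (b := x + 3 / 2)]
      · apply intervalIntegral.integral_congr
        intro y hy
        rw [Set.uIcc_of_le (by linarith), Set.mem_Icc] at hy
        simp only [f]
        rw [Complex.exp_add, hv y (by linarith [hy.1])]
      · intro y hy
        have h1 : φ (y - x) ≠ 0 := by
          intro h
          apply hy
          simp [h]
        have := hs h1
        rw [Set.mem_Icc] at this
        rw [Set.mem_Ioc]
        constructor <;> linarith [this.1, this.2]
    rw [hint]
    have hb := hosc (x, ξ) hz
    simp only at hb
    have h1 : ξ ^ 2 ≤ (C * x) ^ 2 := sq_le_sq' (by linarith [neg_abs_le ξ]) ((le_abs_self ξ).trans hξ)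
    have h2 : (1 + x ^ 2 + ξ ^ 2) ^ ((N : ℝ) / 2) ≤ (2 + C ^ 2) ^ ((N : ℝ) / 2) * x ^ (N : ℝ) := by
      have : x ^ (N : ℝ) = (x ^ 2) ^ ((N : ℝ) / 2) := by
        rw [← Real.rpow_natCast x 2, ← Real.rpow_mul hx.le]
        congr 1
        push_cast
        ring
      rw [this, ← Real.mul_rpow (by positivity) (by positivity)]
      apply Real.rpow_le_rpow (by positivity) _ (by positivity)
      nlinarith
    have h3 : x ^ (0 - (N : ℝ) * (p - 1)) ≤ x ^ (-(N : ℝ)) := by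
      apply Real.rpow_le_rpow_of_exponent_le (by linarith)
      have : (0 : ℝ) ≤ N := by positivity
      nlinarith
    calc _ ≤ ((2 + C ^ 2) ^ ((N : ℝ) / 2) * x ^ (N : ℝ)) * (M * x ^ (-(N : ℝ))) := by
          gcongr
          exact hb.trans (by gcongr)
      _ = (2 + C ^ 2) ^ ((N : ℝ) / 2) * M * (x ^ (N : ℝ) * x ^ (-(N : ℝ))) := by ring
      _ = _ := by rw [← Real.rpow_add hx, add_neg_cancel, Real.rpow_zero, mul_one]

/-- Proposition `frequencyaxis`.  If `p > 2` and `2n ≤ p ≤ 2n+1` for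
some positive integer `n`, then for every real-valued `φ ∈ C_c^∞(ℝ)` supported in
`[−1,1]` and every `(x₀,ξ₀) ≠ (0,0)` with `x₀ ≠ 0` there is an open cone
`Γ ⊆ ℝ² \ {0}` containing `(x₀,ξ₀)` on which the short-time Fourier transform of `u_p`
with window `φ` decays faster than any power of `(1+x²+ξ²)^{1/2}`; i.e.
`WF(u_p) ⊆ {0} × (ℝ \ {0})`. -/
theorem stmt_13 (p : ℝ) (hp2 : 2 < p) (n : ℕ) (hn : 1 ≤ n)
    (hlow : 2 * (n : ℝ) ≤ p) (hhigh : p ≤ 2 * (n : ℝ) + 1) :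
    ∀ φ : ℝ → ℝ, ContDiff ℝ (⊤ : ℕ∞) φ → Function.support φ ⊆ Set.Icc (-1 : ℝ) 1 →
      ∀ x₀ ξ₀ : ℝ, x₀ ≠ 0 →
        ∃ Γ : Set (ℝ × ℝ), IsOpen Γ ∧ ((0 : ℝ), (0 : ℝ)) ∉ Γ ∧
          (∀ z ∈ Γ, ∀ r : ℝ, 0 < r → r • z ∈ Γ) ∧ (x₀, ξ₀) ∈ Γ ∧
          ∀ N : ℕ, ∃ M : ℝ, ∀ x ξ : ℝ, (x, ξ) ∈ Γ →
            (1 + x ^ 2 + ξ ^ 2) ^ ((N : ℝ) / 2) *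
              ‖∫ y : ℝ, u p y * Complex.exp (-(Complex.I) * (y : ℂ) * (ξ : ℂ))
                  * (φ (y - x) : ℂ)‖ ≤ M := by
  intro φ hφ hs x₀ ξ₀ hx₀
  have hsin : 0 ≤ Real.sin (Real.pi * p) := by
    have h := Real.sin_sub_nat_mul_two_pi (Real.pi * p) n
    rw [← h]
    have hpi := Real.pi_pos
    apply Real.sin_nonneg_of_nonneg_of_le_pi <;> nlinarith
  have hu1 : ∀ y, ‖u p y‖ ≤ 1 := by
    intro y
    unfold u
    split_ifs with hy
    · rw [Complex.norm_exp, Real.exp_le_one_iff]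
      simp
    · rw [Complex.norm_exp, Real.exp_le_one_iff, Complex.re_mul_ofReal]
      apply mul_nonpos_of_nonpos_of_nonneg _ (by positivity)
      simp [-Complex.ofReal_cos, -Complex.ofReal_sin, hsin]
  set C : ℝ := |ξ₀| / |x₀| + 1 with hCdef
  have hx0' : 0 < |x₀| := abs_pos.2 hx₀
  have hC : 0 < C := by positivity
  have hCx : |ξ₀| < C * |x₀| := by
    rw [hCdef, add_mul, div_mul_cancel₀ _ hx0'.ne']
    linarith
  rcases lt_or_gt_of_ne hx₀ with hneg | hpos
  · refine ⟨{z | z.1 < 0 ∧ |z.2| < C * (-z.1)}, ?_, by simp, ?_, ?_, ?_⟩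
    · have o1 : IsOpen {z : ℝ × ℝ | z.1 < 0} := isOpen_lt (by fun_prop) (by fun_prop)
      have o2 : IsOpen {z : ℝ × ℝ | |z.2| < C * (-z.1)} := isOpen_lt (by fun_prop) (by fun_prop)
      exact o1.inter o2
    · rintro z ⟨h1, h2⟩ r hr
      refine ⟨mul_neg_of_pos_of_neg hr h1, ?_⟩
      simp only [Prod.smul_snd, Prod.smul_fst, smul_eq_mul, abs_mul, abs_of_pos hr]
      nlinarith
    · rw [abs_of_neg hneg] at hCx
      exact ⟨hneg, hCx⟩
    · intro N
      obtain ⟨M, hM⟩ := core p hp2 (Complex.I * (Real.cos (Real.pi * p) : ℂ)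
        - (Real.sin (Real.pi * p) : ℂ)) (by
          have : Complex.I * (Real.cos (Real.pi * p) : ℂ) - (Real.sin (Real.pi * p) : ℂ) =
            Complex.I * Complex.exp ((Real.pi * p : ℝ) * Complex.I) := by
            rw [Complex.exp_mul_I, ← Complex.ofReal_cos, ← Complex.ofReal_sin]
            linear_combination (-(Real.sin (Real.pi * p) : ℂ)) * Complex.I_mul_I
          rw [this, norm_mul, Complex.norm_exp_ofReal_mul_I, Complex.norm_I, one_mul])
        (by simpa [-Complex.ofReal_cos, -Complex.ofReal_sin] using hsin) C hC
        (fun t => φ (-t)) (hφ.comp contDiff_neg)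
        (by
          intro t ht
          have := hs (show φ (-t) ≠ 0 from ht)
          rw [Set.mem_Icc] at this ⊢
          constructor <;> linarith [this.1, this.2])
        (fun y => u p (-y)) (fun y => hu1 _)
        (by
          intro y hy
          simp only [u]
          rw [if_neg (by linarith), abs_neg, abs_of_pos hy]) N
      refine ⟨M, fun x ξ hx => ?_⟩
      have := hM (-x) (-ξ) (by linarith [hx.1]) (by rw [abs_neg]; exact hx.2.le)
      rw [← integral_neg_eq_self]
      rw [neg_sq, neg_sq] at this
      convert this using 8
      · push_cast; ring
      · ring
  · refine ⟨{z | 0 < z.1 ∧ |z.2| < C * z.1}, ?_, by simp, ?_, ?_, ?_⟩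
    · have o1 : IsOpen {z : ℝ × ℝ | 0 < z.1} := isOpen_lt (by fun_prop) (by fun_prop)
      have o2 : IsOpen {z : ℝ × ℝ | |z.2| < C * z.1} := isOpen_lt (by fun_prop) (by fun_prop)
      exact o1.inter o2
    · rintro z ⟨h1, h2⟩ r hr
      refine ⟨mul_pos hr h1, ?_⟩
      simp only [Prod.smul_snd, Prod.smul_fst, smul_eq_mul, abs_mul, abs_of_pos hr]
      nlinarith
    · rw [abs_of_pos hpos] at hCx
      exact ⟨hpos, hCx⟩
    · intro N
      obtain ⟨M, hM⟩ := core p hp2 Complex.I Complex.norm_I (by simp) C hC φ hφ hs (u p) hu1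
        (by
          intro y hy
          simp only [u]
          rw [if_pos hy.le]) N
      exact ⟨M, fun x ξ hx => hM x ξ hx.1 hx.2.le⟩

end Stmt13
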